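/- (Local ergotropy splits for non-interacting Hamiltonians) Let H := A ⊗ I_m + I_n ⊗ B with A an n×n and B an m×m Hermitian matrix, and let ρ be an nm×nm density matrix with marginals ρ_a (entries (ρ_a)_{i i'} = ∑_j ρ_{(i,j),(i',j)}) and ρ_b (entries (ρ_b)_{j j'} = ∑_i ρ_{(i,j),(i,j')}). Then inf_{U,V} Tr((U⊗V) ρ (U⊗V)* H) = inf_U Tr(U ρ_a U* A) + inf_V Tr(V ρ_b V* B), where the infima run over n×n unitaries U and m×m unitaries V. -/

import Mathlib

open scoped BigOperators ComplexOrder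
open Matrix Kronecker

/-- Nondecreasing rearrangement of a finite real-valued family. -/
noncomputable def sortUp {ι : Type*} [Fintype ι] (f : ι → ℝ) : Fin (Fintype.card ι) → ℝ :=
  (f ∘ (Fintype.equivFin ι).symm) ∘ Tuple.sort (f ∘ (Fintype.equivFin ι).symm)

/-- Nonincreasing rearrangement of a finite real-valued family. -/
noncomputable def sortDown {ι : Type*} [Fintype ι] (f : ι → ℝ) : Fin (Fintype.card ι) → ℝ :=
  fun i => sortUp f i.rev

/-- Ergotropy ξ(ρ,H) = Tr(ρH) − inf over unitaries V of Tr(V ρ V* H). -/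
noncomputable def ergotropy {ι : Type*} [Fintype ι] [DecidableEq ι] (ρ H : Matrix ι ι ℂ) : ℝ :=
  ((ρ * H).trace).re -
    ⨅ V : Matrix.unitaryGroup ι ℂ,
      (((V : Matrix ι ι ℂ) * ρ * star (V : Matrix ι ι ℂ) * H).trace).re

/-- Passive energy E_p(ρ,H) = ∑ λ_i^↓ ε_i^↑. -/
noncomputable def passiveEnergy {ι : Type*} [Fintype ι] [DecidableEq ι]
    {ρ H : Matrix ι ι ℂ} (hρ : ρ.IsHermitian) (hH : H.IsHermitian) : ℝ :=
  ∑ i, sortDown hρ.eigenvalues i * sortUp hH.eigenvalues i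

/-- |u⟩⟨u|, the matrix with entries u_i conj(u_j). -/
noncomputable def ketbra {ι : Type*} (u : ι → ℂ) : Matrix ι ι ℂ := Matrix.vecMulVec u (star u)

/-- Tensor (Kronecker) product of vectors: (u ⊗ v)_(i,j) = u_i v_j. -/
noncomputable def vecTensor {ιa ιb : Type*} (u : ιa → ℂ) (v : ιb → ℂ) : ιa × ιb → ℂ :=
  fun p => u p.1 * v p.2

/-- The local measurement channel Π(ρ) = ∑_k (P_k ⊗ I) ρ (P_k ⊗ I). -/
noncomputable def pinch {ιa ιb K : Type*} [Fintype ιa] [Fintype ιb] [Fintype K]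
    [DecidableEq ιa] [DecidableEq ιb]
    (P : K → Matrix ιa ιa ℂ) (ρ : Matrix (ιa × ιb) (ιa × ιb) ℂ) :
    Matrix (ιa × ιb) (ιa × ιb) ℂ :=
  ∑ k, (P k ⊗ₖ (1 : Matrix ιb ιb ℂ)) * ρ * (P k ⊗ₖ (1 : Matrix ιb ιb ℂ))

/-- Local ergotropy ξ^l(ρ,H) = Tr(ρH) − inf over local unitaries U⊗V of Tr((U⊗V) ρ (U⊗V)* H). -/
noncomputable def localErgotropy {n m : ℕ}
    (ρ H : Matrix (Fin n × Fin m) (Fin n × Fin m) ℂ) : ℝ :=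
  ((ρ * H).trace).re -
    ⨅ W : Matrix.unitaryGroup (Fin n) ℂ × Matrix.unitaryGroup (Fin m) ℂ,
      ((((W.1 : Matrix (Fin n) (Fin n) ℂ) ⊗ₖ (W.2 : Matrix (Fin m) (Fin m) ℂ)) * ρ *
        star ((W.1 : Matrix (Fin n) (Fin n) ℂ) ⊗ₖ (W.2 : Matrix (Fin m) (Fin m) ℂ)) * H).trace).re

/-- First marginal (partial trace over the second factor). -/
noncomputable def marginalA {n m : ℕ} (ρ : Matrix (Fin n × Fin m) (Fin n × Fin m) ℂ) :
    Matrix (Fin n) (Fin n) ℂ :=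
  Matrix.of fun i i' => ∑ j, ρ (i, j) (i', j)

/-- Second marginal (partial trace over the first factor). -/
noncomputable def marginalB {n m : ℕ} (ρ : Matrix (Fin n × Fin m) (Fin n × Fin m) ℂ) :
    Matrix (Fin m) (Fin m) ℂ :=
  Matrix.of fun j j' => ∑ i, ρ (i, j) (i, j')

/-! The partial traces are dual to `X ↦ X ⊗ 1` and `Y ↦ 1 ⊗ Y` under the trace pairing. Hence the
energy of a state under a non-interacting Hamiltonian is the sum of the energies of its marginals,
and a local unitary `U ⊗ V` acts on the first marginal through `U` alone and on the second through
`V` alone. The objective is therefore a sum of a function of `U` and a function of `V`, each bounded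
below by compactness of the unitary group, and the infimum of such a sum is the sum of the infima.
-/

open scoped Pointwise in
theorem ciInf_prod_add {α β G : Type*} [Nonempty α] [Nonempty β] [AddGroup G]
    [ConditionallyCompleteLattice G] [AddLeftMono G] [AddRightMono G] {f : α → G} {g : β → G}
    (hf : BddBelow (Set.range f)) (hg : BddBelow (Set.range g)) :
    ⨅ p : α × β, (f p.1 + g p.2) = (⨅ a, f a) + ⨅ b, g b := by
  have range_eq_add :
      Set.range (fun p : α × β => f p.1 + g p.2) = Set.range f + Set.range g := by
    ext x
    simp only [Set.mem_range, Set.mem_add, Prod.exists, exists_exists_eq_and]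
  rw [iInf, range_eq_add, csInf_add (Set.range_nonempty f) hf (Set.range_nonempty g) hg]
  rfl

section PartialTrace

variable {ι ι' κ κ' l m R : Type*}

/-- The partial trace over the second tensor factor; for a bipartite state this is its first
marginal. Rectangular matrices are allowed on the remaining factor. -/
def partialTraceRight [Fintype κ] [AddCommMonoid R] (ρ : Matrix (ι × κ) (ι' × κ) R) :
    Matrix ι ι' R :=
  Matrix.of fun i i' => ∑ j, ρ (i, j) (i', j)

/-- The partial trace over the first tensor factor; for a bipartite state this is its second
marginal. Rectangular matrices are allowed on the remaining factor. -/
def partialTraceLeft [Fintype ι] [AddCommMonoid R] (ρ : Matrix (ι × κ) (ι × κ') R) :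
    Matrix κ κ' R :=
  Matrix.of fun j j' => ∑ i, ρ (i, j) (i, j')

theorem trace_mul_kronecker_one [Fintype ι] [Fintype ι'] [Fintype κ] [DecidableEq κ]
    [NonAssocSemiring R] (ρ : Matrix (ι × κ) (ι' × κ) R) (X : Matrix ι' ι R) :
    (ρ * (X ⊗ₖ (1 : Matrix κ κ R))).trace = (partialTraceRight ρ * X).trace := by
  simp only [trace, diag_apply, mul_apply, partialTraceRight, of_apply, Fintype.sum_prod_type,
    kroneckerMap_apply, one_apply, mul_ite, mul_one, mul_zero, Finset.sum_ite_eq',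
    Finset.mem_univ, if_true, Finset.sum_mul]
  exact Finset.sum_congr rfl fun _ _ => Finset.sum_comm

theorem trace_mul_one_kronecker [Fintype ι] [DecidableEq ι] [Fintype κ] [Fintype κ']
    [NonAssocSemiring R] (ρ : Matrix (ι × κ) (ι × κ') R) (Y : Matrix κ' κ R) :
    (ρ * ((1 : Matrix ι ι R) ⊗ₖ Y)).trace = (partialTraceLeft ρ * Y).trace := by
  simp only [trace, diag_apply, mul_apply, partialTraceLeft, of_apply, Fintype.sum_prod_type_right,
    kroneckerMap_apply, one_apply, ite_mul, one_mul, zero_mul, mul_ite, mul_zero,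
    Finset.sum_ite_eq', Finset.mem_univ, if_true, Finset.sum_mul]
  exact Finset.sum_congr rfl fun _ _ => Finset.sum_comm

theorem partialTraceRight_kronecker_mul_mul_kronecker [Fintype ι] [Fintype ι'] [Fintype κ]
    [Fintype κ'] [DecidableEq κ] [Finite l] [Finite m] [CommSemiring R]
    (X : Matrix l ι R) {V : Matrix κ' κ R} (ρ : Matrix (ι × κ) (ι' × κ) R)
    (Y : Matrix ι' m R) {W : Matrix κ κ' R} (hWV : W * V = 1) :
    partialTraceRight ((X ⊗ₖ V) * ρ * (Y ⊗ₖ W)) = X * partialTraceRight ρ * Y := by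
  classical
  have := Fintype.ofFinite l
  have := Fintype.ofFinite m
  refine ext_iff_trace_mul_right.2 fun Z => ?_
  calc (partialTraceRight ((X ⊗ₖ V) * ρ * (Y ⊗ₖ W)) * Z).trace
      = ((X ⊗ₖ V) * (ρ * ((Y ⊗ₖ W) * (Z ⊗ₖ (1 : Matrix κ' κ' R))))).trace := by
        simp only [← trace_mul_kronecker_one, Matrix.mul_assoc]
    _ = (ρ * ((Y * Z * X) ⊗ₖ (W * V))).trace := by
        rw [trace_mul_comm, Matrix.mul_assoc, ← mul_kronecker_mul, ← mul_kronecker_mul,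
          Matrix.mul_one]
    _ = (X * partialTraceRight ρ * Y * Z).trace := by
        rw [hWV, trace_mul_kronecker_one, ← Matrix.mul_assoc, trace_mul_comm]
        simp only [Matrix.mul_assoc]

theorem partialTraceLeft_kronecker_mul_mul_kronecker [Fintype ι] [DecidableEq ι] [Fintype ι']
    [Fintype κ] [Fintype κ'] [Finite l] [Finite m] [CommSemiring R]
    {U : Matrix ι' ι R} (X : Matrix l κ R) (ρ : Matrix (ι × κ) (ι × κ') R)
    {W : Matrix ι ι' R} (Y : Matrix κ' m R) (hWU : W * U = 1) :
    partialTraceLeft ((U ⊗ₖ X) * ρ * (W ⊗ₖ Y)) = X * partialTraceLeft ρ * Y := by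
  classical
  have := Fintype.ofFinite l
  have := Fintype.ofFinite m
  refine ext_iff_trace_mul_right.2 fun Z => ?_
  calc (partialTraceLeft ((U ⊗ₖ X) * ρ * (W ⊗ₖ Y)) * Z).trace
      = ((U ⊗ₖ X) * (ρ * ((W ⊗ₖ Y) * ((1 : Matrix ι' ι' R) ⊗ₖ Z)))).trace := by
        simp only [← trace_mul_one_kronecker, Matrix.mul_assoc]
    _ = (ρ * ((W * U) ⊗ₖ (Y * Z * X))).trace := by
        rw [trace_mul_comm, Matrix.mul_assoc, ← mul_kronecker_mul, ← mul_kronecker_mul,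
          Matrix.mul_one]
    _ = (X * partialTraceLeft ρ * Y * Z).trace := by
        rw [hWU, trace_mul_one_kronecker, ← Matrix.mul_assoc, trace_mul_comm]
        simp only [Matrix.mul_assoc]

end PartialTrace

section Unitary

variable {ι κ 𝕜 : Type*} [Fintype ι] [DecidableEq ι] [Fintype κ] [DecidableEq κ]

theorem trace_kronecker_unitary_conj_mul_noninteracting {R : Type*} [CommRing R] [StarRing R]
    (U : unitaryGroup ι R) (V : unitaryGroup κ R) (ρ : Matrix (ι × κ) (ι × κ) R)
    (A : Matrix ι ι R) (B : Matrix κ κ R) :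
    (((U : Matrix ι ι R) ⊗ₖ (V : Matrix κ κ R)) * ρ *
        star ((U : Matrix ι ι R) ⊗ₖ (V : Matrix κ κ R)) * (A ⊗ₖ 1 + 1 ⊗ₖ B)).trace =
      ((U : Matrix ι ι R) * partialTraceRight ρ * star (U : Matrix ι ι R) * A).trace +
        ((V : Matrix κ κ R) * partialTraceLeft ρ * star (V : Matrix κ κ R) * B).trace := by
  rw [Matrix.mul_add, trace_add, trace_mul_kronecker_one, trace_mul_one_kronecker,
    star_eq_conjTranspose, conjTranspose_kronecker,
    ← star_eq_conjTranspose, ← star_eq_conjTranspose,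
    partialTraceRight_kronecker_mul_mul_kronecker _ _ _ (mem_unitaryGroup_iff'.1 V.2),
    partialTraceLeft_kronecker_mul_mul_kronecker _ _ _ (mem_unitaryGroup_iff'.1 U.2)]

variable [RCLike 𝕜]

theorem isCompact_unitaryGroup : IsCompact (unitaryGroup ι 𝕜 : Set (Matrix ι ι 𝕜)) := by
  have isCompact_box : IsCompact (Set.univ.pi fun _ : ι => Set.univ.pi fun _ : ι =>
      Metric.closedBall (0 : 𝕜) 1) :=
    isCompact_univ_pi fun _ => isCompact_univ_pi fun _ => isCompact_closedBall _ _
  refine isCompact_box.of_isClosed_subset (isClosed_unitary (R := Matrix ι ι 𝕜))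
    fun U hU i _ j _ => ?_
  exact mem_closedBall_zero_iff.2 (entry_norm_bound_of_unitary hU i j)

theorem bddBelow_range_re_trace_unitary_conj_mul (ρ A : Matrix ι ι 𝕜) :
    BddBelow (Set.range fun U : unitaryGroup ι 𝕜 =>
      RCLike.re ((U : Matrix ι ι 𝕜) * ρ * star (U : Matrix ι ι 𝕜) * A).trace) := by
  have : CompactSpace (unitaryGroup ι 𝕜) := isCompact_iff_compactSpace.1 isCompact_unitaryGroup
  exact (isCompact_range (by fun_prop)).bddBelow

theorem local_inf_splits_noninteracting_general (A : Matrix ι ι 𝕜) (B : Matrix κ κ 𝕜)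
    (ρ : Matrix (ι × κ) (ι × κ) 𝕜) :
    (⨅ W : unitaryGroup ι 𝕜 × unitaryGroup κ 𝕜,
        RCLike.re (((W.1 : Matrix ι ι 𝕜) ⊗ₖ (W.2 : Matrix κ κ 𝕜)) * ρ *
          star ((W.1 : Matrix ι ι 𝕜) ⊗ₖ (W.2 : Matrix κ κ 𝕜)) * (A ⊗ₖ 1 + 1 ⊗ₖ B)).trace) =
      (⨅ U : unitaryGroup ι 𝕜, RCLike.re
        ((U : Matrix ι ι 𝕜) * partialTraceRight ρ * star (U : Matrix ι ι 𝕜) * A).trace) +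
      ⨅ V : unitaryGroup κ 𝕜, RCLike.re
        ((V : Matrix κ κ 𝕜) * partialTraceLeft ρ * star (V : Matrix κ κ 𝕜) * B).trace := by
  simp only [trace_kronecker_unitary_conj_mul_noninteracting, map_add]
  exact ciInf_prod_add (bddBelow_range_re_trace_unitary_conj_mul _ A)
    (bddBelow_range_re_trace_unitary_conj_mul _ B)

end Unitary

/-- for non-interacting Hamiltonians, the local passive-energy
optimization splits into the two marginals. -/
theorem local_inf_splits_noninteracting {n m : ℕ}
    {A : Matrix (Fin n) (Fin n) ℂ} {B : Matrix (Fin m) (Fin m) ℂ}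
    (hA : A.IsHermitian) (hB : B.IsHermitian)
    (H : Matrix (Fin n × Fin m) (Fin n × Fin m) ℂ)
    (hHdef : H = A ⊗ₖ (1 : Matrix (Fin m) (Fin m) ℂ)
        + (1 : Matrix (Fin n) (Fin n) ℂ) ⊗ₖ B)
    {ρ : Matrix (Fin n × Fin m) (Fin n × Fin m) ℂ}
    (hρ : ρ.PosSemidef) (hρtr : ρ.trace = 1) :
    (⨅ W : Matrix.unitaryGroup (Fin n) ℂ × Matrix.unitaryGroup (Fin m) ℂ,
        ((((W.1 : Matrix (Fin n) (Fin n) ℂ) ⊗ₖ (W.2 : Matrix (Fin m) (Fin m) ℂ)) * ρ *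
          star ((W.1 : Matrix (Fin n) (Fin n) ℂ) ⊗ₖ (W.2 : Matrix (Fin m) (Fin m) ℂ)) *
            H).trace).re)
      = (⨅ U : Matrix.unitaryGroup (Fin n) ℂ,
          (((U : Matrix (Fin n) (Fin n) ℂ) * marginalA ρ *
            star (U : Matrix (Fin n) (Fin n) ℂ) * A).trace).re)
        + ⨅ V : Matrix.unitaryGroup (Fin m) ℂ,
            (((V : Matrix (Fin m) (Fin m) ℂ) * marginalB ρ *
              star (V : Matrix (Fin m) (Fin m) ℂ) * B).trace).re := by
  subst hHdef
  exact local_inf_splits_noninteracting_general A B ρ
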